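/- arXiv:0909.4767 — 6 statements merged into one kernel-verified Lean document; each statement's English description precedes it below -/
import Mathlib

section
/- Let G be a finite group acting on a finite set X, and suppose X is G-symmetric: for every (x, y) ∈ X², there exists g ∈ G with g·x = y and g·y = x. Then for any two G-invariant functions K, K' : X × X → ℂ (meaning K(g·x, g·y) = K(x, y) for all g ∈ G and (x,y) ∈ X², and likewise for K'), the convolutions agree: K * K' = K' * K, where (K * K')(x, y) = Σ_{z ∈ X} K(x, z)·K'(z, y). That is, the algebra of G-invariant kernels on X under convolution is commutative. -/
/-- For a finite group `G` acting on a finite set `X` which is `G`-symmetric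
(every pair `(x, y)` can be swapped by some `g ∈ G`), the algebra of `G`-invariant kernels
on `X` under convolution is commutative. -/
theorem invariant_kernels_commute {G X : Type*} [Group G] [Fintype G] [MulAction G X]
    [Fintype X]
    (hsym : ∀ x y : X, ∃ g : G, g • x = y ∧ g • y = x)
    (K K' : X → X → ℂ)
    (hK : ∀ (g : G) (x y : X), K (g • x) (g • y) = K x y)
    (hK' : ∀ (g : G) (x y : X), K' (g • x) (g • y) = K' x y) :
    ∀ x y : X, (∑ z : X, K x z * K' z y) = ∑ z : X, K' x z * K z y := by
  have sK : ∀ a b, K a b = K b a := by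
    intro a b
    obtain ⟨g, h1, h2⟩ := hsym a b
    have h := hK g a b
    rw [h1, h2] at h
    exact h.symm
  have sK' : ∀ a b, K' a b = K' b a := by
    intro a b
    obtain ⟨g, h1, h2⟩ := hsym a b
    have h := hK' g a b
    rw [h1, h2] at h
    exact h.symm
  intro x y
  obtain ⟨g, h1, h2⟩ := hsym x y
  refine Fintype.sum_equiv (MulAction.toPerm g) _ _ ?_
  intro z
  have e1 := hK g x z
  have e2 := hK' g z y
  rw [h1] at e1
  rw [h2] at e2
  rw [MulAction.toPerm_apply, ← e1, ← e2, sK y, sK' _ x, mul_comm]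
end

section
/- Let n ≥ 1 and for 0 ≤ k ≤ n define the Krawtchouk polynomial value K_k(w) = Σ_{i=0}^{w} (−1)^i · C(w, i) · C(n−w, k−i) for integer 0 ≤ w ≤ n (binomial coefficients, with C(a,b) = 0 when b < 0 or b > a). Then for every subset C ⊆ F_2^n (binary code) and every 0 ≤ k ≤ n: Σ_{(c, c') ∈ C²} K_k(d_H(c, c')) ≥ 0, where d_H(x, y) is the Hamming distance, the number of coordinates where x and y differ. -/
/-- The value `K_k(w)` of the binary Krawtchouk polynomial of degree `k` and parameter `n`:
`K_k(w) = ∑_{i=0}^{w} (-1)^i C(w, i) C(n-w, k-i)`, where the binomial coefficient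
`C(a, b)` is zero when `b < 0` (encoded via the `if i ≤ k` guard) or `b > a`. -/
def kraw (n k w : ℕ) : ℤ :=
  ∑ i ∈ Finset.range (w + 1),
    if i ≤ k then (-1 : ℤ) ^ i * (w.choose i) * ((n - w).choose (k - i)) else 0

open Polynomial in
lemma kraw_eq_coeff (n k w : ℕ) :
    kraw n k w = ((1 - X : ℤ[X]) ^ w * (1 + X) ^ (n - w)).coeff k := by
  have h1 : ∀ i, ((1 - X : ℤ[X]) ^ w).coeff i = (-1) ^ i * (w.choose i : ℤ) := by
    intro i
    have h : (1 - X : ℤ[X]) ^ w = ((1 + X) ^ w).comp (C (-1) * X) := by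
      simp [sub_eq_add_neg]
    rw [h, comp_C_mul_X_coeff, coeff_one_add_X_pow]
    ring
  rw [coeff_mul, Finset.Nat.sum_antidiagonal_eq_sum_range_succ_mk]
  simp only [h1, coeff_one_add_X_pow]
  unfold kraw
  rw [← Finset.sum_filter]
  apply Finset.sum_subset_zero_on_sdiff
  · intro i hi
    simp at hi ⊢
    omega
  · intro i hi
    simp only [Finset.mem_sdiff, Finset.mem_filter, Finset.mem_range] at hi
    rw [Nat.choose_eq_zero_of_lt (by omega : w < i)]
    simp
  · intro i hi
    rfl

/-- The nontrivial sign character. -/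
def chiSign (x : ZMod 2) : ℤ := if x = 0 then 1 else -1

lemma chiSign_mul (x y : ZMod 2) :
    chiSign x * chiSign y = if x ≠ y then -1 else 1 := by
  revert x y; decide

open Polynomial in
lemma kraw_hamming (n k : ℕ) (c c' : Fin n → ZMod 2) :
    kraw n k (hammingDist c c') =
      ∑ S ∈ Finset.powersetCard k (Finset.univ : Finset (Fin n)),
        (∏ i ∈ S, chiSign (c i)) * ∏ i ∈ S, chiSign (c' i) := by
  have hcard : (Finset.univ.filter (fun i => ¬ c i ≠ c' i)).card = n - hammingDist c c' := by
    have := Finset.card_filter_add_card_filter_not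
      (s := (Finset.univ : Finset (Fin n))) (fun i => c i ≠ c' i)
    simp only [Finset.card_univ, Fintype.card_fin] at this
    unfold hammingDist
    omega
  have hprod : (1 - X : ℤ[X]) ^ (hammingDist c c') * (1 + X) ^ (n - hammingDist c c') =
      ∏ i, (1 + Polynomial.C (chiSign (c i) * chiSign (c' i)) * X) := by
    have h : ∀ i, (1 + Polynomial.C (chiSign (c i) * chiSign (c' i)) * X : ℤ[X]) =
        if c i ≠ c' i then 1 - X else 1 + X := by
      intro i
      rw [chiSign_mul]
      split_ifs <;> simp [sub_eq_add_neg]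
    rw [Finset.prod_congr rfl (fun i _ => h i), Finset.prod_ite, Finset.prod_const,
      Finset.prod_const, hcard]
    rfl
  rw [kraw_eq_coeff, hprod, Finset.prod_one_add, finsetSum_coeff]
  have hc : ∀ S : Finset (Fin n),
      (∏ i ∈ S, (Polynomial.C (chiSign (c i) * chiSign (c' i)) * X : ℤ[X])).coeff k =
      if k = S.card then (∏ i ∈ S, chiSign (c i)) * ∏ i ∈ S, chiSign (c' i) else 0 := by
    intro S
    rw [Finset.prod_mul_distrib, Finset.prod_const, ← map_prod, coeff_C_mul_X_pow,
      Finset.prod_mul_distrib]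
  simp only [hc]
  rw [Finset.powersetCard_eq_filter, Finset.sum_filter]
  simp only [eq_comm]

/-- for every binary code `C ⊆ F_2^n` and every `0 ≤ k ≤ n`,
`∑_{(c,c') ∈ C²} K_k(d_H(c,c')) ≥ 0`. -/
theorem krawtchouk_sum_nonneg (n k : ℕ) (hn : 1 ≤ n) (hk : k ≤ n)
    (C : Finset (Fin n → ZMod 2)) :
    0 ≤ ∑ c ∈ C, ∑ c' ∈ C, kraw n k (hammingDist c c') := by
  simp only [kraw_hamming]
  have h : ∑ c ∈ C, ∑ c' ∈ C, ∑ S ∈ Finset.powersetCard k (Finset.univ : Finset (Fin n)),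
        (∏ i ∈ S, chiSign (c i)) * ∏ i ∈ S, chiSign (c' i) =
      ∑ S ∈ Finset.powersetCard k (Finset.univ : Finset (Fin n)),
        (∑ c ∈ C, ∏ i ∈ S, chiSign (c i)) ^ 2 := by
    simp only [sq, Finset.sum_mul_sum]
    rw [Finset.sum_comm]
    simp only [Finset.sum_comm (s := C) (t := Finset.powersetCard k _)]
    refine Finset.sum_congr rfl fun S _ => ?_
    rw [Finset.sum_comm]
  rw [h]
  exact Finset.sum_nonneg fun S _ => sq_nonneg _
end

section
/- Let n ≥ 1 and for 0 ≤ k ≤ n define K_k(w) = Σ_{i=0}^{w} (−1)^i · C(w, i) · C(n−w, k−i). Then the Krawtchouk polynomials satisfy the orthogonality relations: for all 0 ≤ k, l ≤ n, (1/2^n) · Σ_{w=0}^{n} C(n, w) · K_k(w) · K_l(w) = δ_{k,l} · C(n, k). -/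
open Polynomial in
lemma coeff_one_sub_pow (w i : ℕ) :
    ((1 - X : ℤ[X]) ^ w).coeff i = (-1) ^ i * (w.choose i : ℤ) := by
  have h : (1 - X : ℤ[X]) ^ w = ((1 + X : ℤ[X]) ^ w).comp (C (-1) * X) := by
    simp [sub_eq_add_neg]
  rw [h, comp_C_mul_X_coeff, coeff_one_add_X_pow]
  push_cast
  ring

open Polynomial in
lemma coeff_two (p q : ℤ[X]) (k l : ℕ) :
    ((C p * q.map C : ℤ[X][X]).coeff l).coeff k = p.coeff k * q.coeff l := by
  rw [coeff_C_mul, coeff_map, coeff_mul_C]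

open Polynomial in
lemma kraw_sum (n k l : ℕ) :
    ∑ w ∈ Finset.range (n + 1), (n.choose w : ℤ) * kraw n k w * kraw n l w =
      2 ^ n * if k = l then (n.choose k : ℤ) else 0 := by
  have key : ∑ w ∈ Finset.range (n + 1), (C (C (n.choose w : ℤ)) : ℤ[X][X]) *
      (C ((1 - X : ℤ[X]) ^ w * (1 + X) ^ (n - w)) *
        ((1 - X : ℤ[X]) ^ w * (1 + X) ^ (n - w)).map C) =
      C (C (2 ^ n)) * ((1 + X : ℤ[X][X]) ^ n).comp (C X * X) := by
    have h : (C (C (2 ^ n)) * ((1 + X : ℤ[X][X]) ^ n).comp (C X * X) : ℤ[X][X]) =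
        ((C (1 - X) * (1 - X)) + (C (1 + X) * (1 + X))) ^ n := by
      simp only [pow_comp, add_comp, one_comp, X_comp, map_pow, ← mul_pow]
      congr 1
      simp only [map_sub, map_add, map_one, map_ofNat]
      ring
    rw [h, add_pow]
    apply Finset.sum_congr rfl
    intro w _
    simp only [Polynomial.map_mul, Polynomial.map_pow, Polynomial.map_sub, Polynomial.map_add,
      Polynomial.map_one, map_X, map_mul, map_pow, mul_pow, map_natCast]
    ring
  have := congrArg (fun p : ℤ[X][X] => (p.coeff l).coeff k) key
  simp only [finset_sum_coeff, coeff_C_mul, coeff_two, ← kraw_eq_coeff, comp_C_mul_X_coeff,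
    coeff_map, coeff_mul_C, coeff_one_add_X_pow] at this
  simp only [mul_assoc]
  rw [this, ← map_natCast (C : ℤ →+* ℤ[X]), coeff_C_mul, coeff_X_pow]
  split_ifs with h
  · subst h; simp
  · simp

/-- orthogonality relations for the binary Krawtchouk polynomials:
`(1/2^n) ∑_{w=0}^{n} C(n,w) K_k(w) K_l(w) = δ_{k,l} C(n,k)` for `0 ≤ k, l ≤ n`. -/
theorem krawtchouk_orthogonality (n k l : ℕ) (hn : 1 ≤ n) (hk : k ≤ n) (hl : l ≤ n) :
    (1 / (2 : ℝ) ^ n) * ∑ w ∈ Finset.range (n + 1),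
        (n.choose w : ℝ) * (kraw n k w : ℝ) * (kraw n l w : ℝ) =
      if k = l then (n.choose k : ℝ) else 0 := by
  have h := congrArg (fun z : ℤ => (z : ℝ)) (kraw_sum n k l)
  push_cast at h
  rw [h, ← mul_assoc, one_div, inv_mul_cancel₀ (by positivity), one_mul]
end

section
/- (Delsarte linear programming bound for binary codes.) Let n ≥ 1 and δ ≥ 1 be integers. Let f_0, f_1, …, f_n be real numbers with f_0 > 0 and f_k ≥ 0 for all k, and define F(w) = Σ_{k=0}^{n} f_k · K_k(w), where K_k(w) = Σ_{i=0}^{w} (−1)^i C(w, i) C(n−w, k−i) are the binary Krawtchouk polynomial values. If F(w) ≤ 0 for every integer w with δ ≤ w ≤ n, then every code C ⊆ F_2^n with minimal Hamming distance at least δ (d_H(c, c') ≥ δ for all distinct c, c' ∈ C) satisfies |C| ≤ F(0)/f_0. -/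
open Polynomial in
lemma sum_prod_eq_kraw {n : ℕ} (k : ℕ) (D : Finset (Fin n)) :
    ∑ S ∈ (Finset.univ : Finset (Fin n)).powersetCard k, ∏ i ∈ S, (if i ∈ D then (-1 : ℤ) else 1)
      = kraw n k D.card := by
  have h1 : ∏ i : Fin n, (1 + C (if i ∈ D then (-1 : ℤ) else 1) * X)
      = (1 + C (-1) * X : ℤ[X]) ^ D.card * (1 + X) ^ (n - D.card) := by
    rw [← Finset.prod_mul_prod_compl D]
    congr 1
    · rw [← Finset.prod_const]
      exact Finset.prod_congr rfl fun i hi => by rw [if_pos hi]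
    · have : n - D.card = Dᶜ.card := by rw [Finset.card_compl, Fintype.card_fin]
      rw [this, ← Finset.prod_const]
      refine Finset.prod_congr rfl fun i hi => ?_
      rw [if_neg (Finset.mem_compl.mp hi)]; simp
  have h2 := congrArg (fun p => coeff p k) h1
  rw [Finset.prod_one_add] at h2
  simp only [Finset.prod_mul_distrib, Finset.prod_const, ← map_prod, finset_sum_coeff,
    coeff_C_mul, coeff_X_pow] at h2
  rw [add_comm (1 : ℤ[X]) (C (-1) * X), add_pow, Finset.sum_mul, finset_sum_coeff] at h2
  have h3 : ∑ S ∈ (Finset.univ : Finset (Fin n)).powersetCard k,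
      ∏ i ∈ S, (if i ∈ D then (-1 : ℤ) else 1)
      = ∑ S ∈ (Finset.univ : Finset (Fin n)).powerset,
        (∏ i ∈ S, (if i ∈ D then (-1 : ℤ) else 1)) * (if k = S.card then 1 else 0) := by
    rw [Finset.powersetCard_eq_filter, Finset.sum_filter]
    refine Finset.sum_congr rfl fun S _ => ?_
    simp only [mul_ite, mul_one, mul_zero, eq_comm]
  rw [h3, h2, kraw]
  refine Finset.sum_congr rfl fun i _ => ?_
  have : ((C (-1) * X) ^ i * 1 ^ (D.card - i) * ((D.card.choose i : ℕ) : ℤ[X])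
      * (1 + X) ^ (n - D.card))
      = C ((-1) ^ i * (D.card.choose i : ℤ)) * (X ^ i * (1 + X) ^ (n - D.card)) := by
    simp only [mul_pow, map_mul, map_pow, one_pow, map_natCast]
    ring
  rw [this, coeff_C_mul, coeff_X_pow_mul']
  split_ifs with h
  · rw [coeff_one_add_X_pow]
  · simp

def sgn (a : ZMod 2) : ℤ := if a = 0 then 1 else -1

lemma sgn_mul (a b : ZMod 2) : sgn a * sgn b = if a ≠ b then -1 else 1 := by
  revert a b; decide

lemma kraw_dist {n : ℕ} (k : ℕ) (x y : Fin n → ZMod 2) :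
    kraw n k (hammingDist x y) = ∑ S ∈ (Finset.univ : Finset (Fin n)).powersetCard k,
      (∏ i ∈ S, sgn (x i)) * ∏ i ∈ S, sgn (y i) := by
  rw [hammingDist, ← sum_prod_eq_kraw]
  refine Finset.sum_congr rfl fun S _ => ?_
  rw [← Finset.prod_mul_distrib]
  refine Finset.prod_congr rfl fun i _ => ?_
  rw [sgn_mul]; simp

lemma sum_kraw {n : ℕ} (k : ℕ) (A : Finset (Fin n → ZMod 2)) :
    ∑ x ∈ A, ∑ y ∈ A, kraw n k (hammingDist x y)
      = ∑ S ∈ (Finset.univ : Finset (Fin n)).powersetCard k, (∑ x ∈ A, ∏ i ∈ S, sgn (x i)) ^ 2 := by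
  simp only [kraw_dist, sq, Finset.sum_mul_sum]
  rw [Finset.sum_comm' (t' := A) (s' := fun _ => A) (by tauto)]
  symm
  rw [Finset.sum_comm]
  refine (Finset.sum_congr rfl fun x _ => Finset.sum_comm).trans ?_
  rw [Finset.sum_comm]

/-- the Delsarte linear programming bound for binary codes: if
`F(w) = ∑_{k=0}^n f_k K_k(w)` with `f_0 > 0`, `f_k ≥ 0`, and `F(w) ≤ 0` for all integers
`δ ≤ w ≤ n`, then every binary code `C ⊆ F_2^n` with minimal Hamming distance at least `δ`
satisfies `|C| ≤ F(0)/f_0`. -/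
theorem delsarte_lp_bound (n δ : ℕ) (hn : 1 ≤ n) (hδ : 1 ≤ δ) (f : ℕ → ℝ)
    (hf0 : 0 < f 0) (hf : ∀ k, k ≤ n → 0 ≤ f k)
    (hF : ∀ w : ℕ, δ ≤ w → w ≤ n →
      (∑ k ∈ Finset.range (n + 1), f k * (kraw n k w : ℝ)) ≤ 0)
    (C : Finset (Fin n → ZMod 2))
    (hC : ∀ c ∈ C, ∀ c' ∈ C, c ≠ c' → δ ≤ hammingDist c c') :
    (C.card : ℝ) ≤ (∑ k ∈ Finset.range (n + 1), f k * (kraw n k 0 : ℝ)) / f 0 := by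
  set F : ℕ → ℝ := fun w => ∑ k ∈ Finset.range (n + 1), f k * (kraw n k w : ℝ) with hFdef
  change (C.card : ℝ) ≤ F 0 / f 0
  have hswap : ∑ x ∈ C, ∑ y ∈ C, F (hammingDist x y)
      = ∑ k ∈ Finset.range (n + 1),
        f k * ((∑ x ∈ C, ∑ y ∈ C, kraw n k (hammingDist x y) : ℤ) : ℝ) := by
    simp only [hFdef]
    push_cast
    simp only [Finset.mul_sum]
    rw [Finset.sum_comm' (s := Finset.range (n + 1)) (t' := C)
      (s' := fun _ => Finset.range (n + 1)) (by tauto)]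
    exact Finset.sum_congr rfl fun x _ => Finset.sum_comm
  have hlow : f 0 * (C.card : ℝ) ^ 2 ≤ ∑ x ∈ C, ∑ y ∈ C, F (hammingDist x y) := by
    rw [hswap]
    have h0 : f 0 * (C.card : ℝ) ^ 2
        = f 0 * ((∑ x ∈ C, ∑ y ∈ C, kraw n 0 (hammingDist x y) : ℤ) : ℝ) := by
      rw [sum_kraw]; simp
    rw [h0]
    refine Finset.single_le_sum (f := fun k =>
      f k * ((∑ x ∈ C, ∑ y ∈ C, kraw n k (hammingDist x y) : ℤ) : ℝ)) (fun k hk => ?_)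
      (Finset.mem_range.mpr (Nat.succ_pos n))
    refine mul_nonneg (hf k (Nat.lt_succ_iff.mp (Finset.mem_range.mp hk))) ?_
    rw [sum_kraw]
    exact Int.cast_nonneg (Finset.sum_nonneg fun S _ => sq_nonneg _)
  have hup : ∑ x ∈ C, ∑ y ∈ C, F (hammingDist x y) ≤ (C.card : ℝ) * F 0 := by
    rw [← nsmul_eq_mul]
    refine Finset.sum_le_card_nsmul _ _ _ fun x hx => ?_
    rw [← Finset.add_sum_erase C _ hx, hammingDist_self]
    have : ∑ y ∈ C.erase x, F (hammingDist x y) ≤ 0 := by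
      refine Finset.sum_nonpos fun y hy => ?_
      obtain ⟨hne, hyC⟩ := Finset.mem_erase.mp hy
      refine hF _ (hC x hx y hyC hne.symm) ?_
      simpa using hammingDist_le_card_fintype (x := x) (y := y)
    linarith
  rw [le_div_iff₀ hf0]
  rcases Nat.eq_zero_or_pos C.card with h | h
  · rw [h]
    have hk : ∀ k, 0 ≤ kraw n k 0 := fun k => by simp [kraw]
    have : 0 ≤ F 0 := Finset.sum_nonneg fun k hk' =>
      mul_nonneg (hf k (Nat.lt_succ_iff.mp (Finset.mem_range.mp hk'))) (by exact_mod_cast hk k)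
    simpa using this
  · have hpos : (0 : ℝ) < C.card := by exact_mod_cast h
    have := hlow.trans hup
    refine le_of_mul_le_mul_left ?_ hpos
    nlinarith
end

section
/- Let Γ = (V, E) be a finite simple graph and let c : V → {1, …, k} be a proper coloring of the complement graph of Γ (i.e., c(i) ≠ c(j) whenever i ≠ j and (i, j) ∉ E). Then for every real symmetric positive semidefinite matrix B indexed by V × V satisfying Σ_{i∈V} B_{i,i} = 1 and B_{i,j} = 0 for all (i, j) ∈ E, one has Σ_{(i,j)∈V²} B_{i,j} ≤ k. (In particular, the Lovász theta number ϑ(Γ), defined as the maximum of Σ_{i,j} B_{i,j} over such B, satisfies ϑ(Γ) ≤ χ(complement of Γ).) -/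
/-- the Lovász theta number of a graph is at most the chromatic number of
the complement graph: any proper coloring of the complement with `k` colors bounds the
value of any feasible solution of the theta SDP by `k`. -/
theorem theta_le_chromatic_of_complement {V : Type*} [Fintype V] (Γ : SimpleGraph V)
    (k : ℕ) (c : V → Fin k)
    (hc : ∀ i j : V, i ≠ j → ¬ Γ.Adj i j → c i ≠ c j)
    (B : Matrix V V ℝ) (hB : B.PosSemidef)
    (htr : ∑ i, B i i = 1)
    (hE : ∀ i j, Γ.Adj i j → B i j = 0) :
    (∑ i, ∑ j, B i j) ≤ k := by
  classical
  have hk : (0 : ℝ) < k := by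
    rcases isEmpty_or_nonempty V with h | ⟨⟨x⟩⟩
    · simp at htr
    · exact_mod_cast (Fin.pos (c x))
  let v : Fin k → V → ℝ := fun a i => (k : ℝ) * (if c i = a then 1 else 0) - 1
  have h0 : ∀ a, 0 ≤ ∑ i, ∑ j, B i j * (v a i * v a j) := by
    intro a
    have h := hB.dotProduct_mulVec_nonneg (v a)
    simp only [dotProduct, Matrix.mulVec, Finset.mul_sum, star_trivial] at h
    refine h.trans_eq ?_
    refine Finset.sum_congr rfl fun i _ => Finset.sum_congr rfl fun j _ => by ring
  have hv : ∀ i j, ∑ a, v a i * v a j = (k : ℝ)^2 * (if c i = c j then 1 else 0) - k := by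
    intro i j
    have : ∀ a, v a i * v a j = (k:ℝ)^2 * (if c i = a then (if c j = a then 1 else 0) else 0)
        - k * (if c i = a then 1 else 0) - k * (if c j = a then 1 else 0) + 1 := by
      intro a
      simp only [v]
      split_ifs <;> ring
    simp only [this, Finset.sum_add_distrib, Finset.sum_sub_distrib, ← Finset.mul_sum,
      Finset.sum_ite_eq, Finset.mem_univ, if_true]
    simp [eq_comm]
  have hs : ∑ a, ∑ i, ∑ j, B i j * (v a i * v a j)
      = (k:ℝ)^2 * ∑ i, B i i - k * ∑ i, ∑ j, B i j := by
    rw [Finset.sum_comm, Finset.mul_sum, Finset.mul_sum, ← Finset.sum_sub_distrib]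
    refine Finset.sum_congr rfl fun i _ => ?_
    rw [Finset.sum_comm]
    simp only [← Finset.mul_sum, hv]
    have : ∀ j, B i j * ((k:ℝ)^2 * (if c i = c j then 1 else 0) - k)
        = (if i = j then (k:ℝ)^2 * B i j else 0) - k * B i j := by
      intro j
      by_cases hij : i = j
      · subst hij; simp; ring
      · by_cases hA : Γ.Adj i j
        · simp [hE i j hA]
        · simp [hij, hc i j hij hA]; ring
    simp only [this, Finset.sum_sub_distrib, ← Finset.mul_sum, Finset.sum_ite_eq,
      Finset.mem_univ, if_true]
  have h1 := Finset.sum_nonneg (fun a (_ : a ∈ Finset.univ) => h0 a)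
  rw [hs, htr] at h1
  have : (k:ℝ) * ∑ i, ∑ j, B i j ≤ k * k := by nlinarith
  exact le_of_mul_le_mul_left this hk
end

section
/- Let q ≥ 3 be an odd integer and let C_q be the cycle graph with vertex set ℤ/qℤ and edges {i, i+1} (mod q). Then the Lovász theta number of C_q equals q·cos(π/q)/(1 + cos(π/q)); that is: (i) every real symmetric positive semidefinite matrix B indexed by (ℤ/qℤ)² with Σ_i B_{i,i} = 1 and B_{i,j} = 0 whenever j = i+1 or j = i−1 (mod q) satisfies Σ_{(i,j)} B_{i,j} ≤ q·cos(π/q)/(1 + cos(π/q)); and (ii) there exists such a matrix B attaining equality. -/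
section ThetaAux

/-- real part of the standard character -/
noncomputable def thR (q : ℕ) [NeZero q] (x : ZMod q) : ℝ := (ZMod.stdAddChar x : ℂ).re
/-- imaginary part of the standard character -/
noncomputable def thI (q : ℕ) [NeZero q] (x : ZMod q) : ℝ := (ZMod.stdAddChar x : ℂ).im

theorem thR_add (q : ℕ) [NeZero q] (x y : ZMod q) :
    thR q (x + y) = thR q x * thR q y - thI q x * thI q y := by
  simp [thR, thI, AddChar.map_add_eq_mul]

theorem thR_neg (q : ℕ) [NeZero q] (x : ZMod q) : thR q (-x) = thR q x := by
  simp [thR, AddChar.map_neg_eq_conj]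

theorem thI_neg (q : ℕ) [NeZero q] (x : ZMod q) : thI q (-x) = - thI q x := by
  simp [thI, AddChar.map_neg_eq_conj]

theorem thR_sub (q : ℕ) [NeZero q] (x y : ZMod q) :
    thR q (x - y) = thR q x * thR q y + thI q x * thI q y := by
  rw [sub_eq_add_neg, thR_add, thR_neg, thI_neg]; ring

theorem thR_zero (q : ℕ) [NeZero q] : thR q 0 = 1 := by
  simp [thR]

theorem thR_sum (q : ℕ) [NeZero q] (d : ZMod q) :
    ∑ j, thR q (j * d) = if d = 0 then (q : ℝ) else 0 := by
  have h := AddChar.sum_mulShift d (ZMod.isPrimitive_stdAddChar q)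
  have h2 := congrArg Complex.re h
  simp only [Complex.re_sum] at h2
  unfold thR
  rw [h2]
  split_ifs <;> simp [ZMod.card]

theorem thR_nat (q : ℕ) [NeZero q] (n : ℕ) :
    thR q (n : ZMod q) = Real.cos (2 * Real.pi * n / q) := by
  have h := ZMod.stdAddChar_coe (N := q) (n : ℤ)
  unfold thR
  rw [Int.cast_natCast] at h
  rw [h]
  have : (2 * (Real.pi : ℂ) * Complex.I * ((n : ℤ) : ℂ) / (q : ℂ))
      = ((2 * Real.pi * n / q : ℝ) : ℂ) * Complex.I := by push_cast; ring
  rw [this, Complex.exp_ofReal_mul_I_re]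

theorem thR_ge (q : ℕ) [NeZero q] (hq : Odd q) (x : ZMod q) :
    - Real.cos (Real.pi / q) ≤ thR q x := by
  have hx := ZMod.natCast_zmod_val x
  rw [← hx, thR_nat]
  have hlt := ZMod.val_lt x
  generalize x.val = n at *
  have hq0 : (0 : ℝ) < q := by exact_mod_cast NeZero.pos q
  have e : Real.cos (2 * Real.pi * n / q) = - Real.cos |Real.pi * (2 * n - q) / q| := by
    rw [Real.cos_abs, ← Real.cos_add_pi]
    congr 1
    field_simp
    ring
  rw [e, neg_le_neg_iff]
  have h1 : (1 : ℝ) ≤ |2 * (n : ℝ) - q| := by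
    have : (1 : ℤ) ≤ |2 * (n : ℤ) - q| := by
      apply Int.one_le_abs
      obtain ⟨k, rfl⟩ := hq
      push_cast
      omega
    exact_mod_cast this
  have h2 : |2 * (n : ℝ) - q| ≤ q := by
    have : (n : ℝ) < q := by exact_mod_cast hlt
    have : (0 : ℝ) ≤ n := by positivity
    rw [abs_le]; constructor <;> linarith
  have h3 : |Real.pi * (2 * n - q) / q| = Real.pi * |2 * (n : ℝ) - q| / q := by
    rw [abs_div, abs_mul, abs_of_pos Real.pi_pos, abs_of_pos hq0]
  rw [h3]
  apply Real.cos_le_cos_of_nonneg_of_le_pi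
  · positivity
  · rw [div_le_iff₀ hq0]
    exact mul_le_mul_of_nonneg_left h2 Real.pi_pos.le
  · gcongr
    nlinarith [Real.pi_pos]

theorem quad_nonneg {n : Type*} [Fintype n] (B : Matrix n n ℝ) (hB : B.PosSemidef) (v : n → ℝ) :
    0 ≤ ∑ x, ∑ y, B x y * (v x * v y) := by
  have h := hB.dotProduct_mulVec_nonneg v
  simp only [dotProduct, Matrix.mulVec, Finset.mul_sum, Pi.star_apply, star_trivial] at h
  refine h.trans_eq ?_
  refine Finset.sum_congr rfl fun x _ => Finset.sum_congr rfl fun y _ => by ring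

theorem theta_upper (q : ℕ) [NeZero q] (hq : Odd q)
    (hc : 0 < 1 + Real.cos (Real.pi / q))
    (B : Matrix (ZMod q) (ZMod q) ℝ) (hB : B.PosSemidef) (ht : (∑ i, B i i) = 1)
    (hz : ∀ i j : ZMod q, (j = i + 1 ∨ j = i - 1) → B i j = 0) :
    (∑ i, ∑ j, B i j) ≤ q * Real.cos (Real.pi / q) / (1 + Real.cos (Real.pi / q)) := by
  set c := Real.cos (Real.pi / q)
  let b : ZMod q → ℝ := fun j => ∑ x, ∑ y, B x y * thR q (j * (x - y))
  have hb : ∀ j, 0 ≤ b j := by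
    intro j
    have h1 := quad_nonneg B hB (fun x => thR q (j * x))
    have h2 := quad_nonneg B hB (fun x => thI q (j * x))
    refine (add_nonneg h1 h2).trans_eq ?_
    simp only [b, ← Finset.sum_add_distrib, mul_sub, thR_sub, mul_add]
  have hb0 : b 0 = ∑ i, ∑ j, B i j := by simp [b, thR_zero]
  have swap : ∀ f : ZMod q → ZMod q → ℝ,
      ∑ j, ∑ x, ∑ y, B x y * f j (x - y) = ∑ x, ∑ y, B x y * ∑ j, f j (x - y) := by
    intro f
    rw [Finset.sum_comm]
    refine Finset.sum_congr rfl fun x _ => ?_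
    rw [Finset.sum_comm]
    simp only [Finset.mul_sum]
  have hs : ∑ j, b j = q := by
    simp only [b]
    rw [swap (fun j d => thR q (j * d))]
    simp only [thR_sum, sub_eq_zero, mul_ite, mul_zero, Finset.sum_ite_eq, Finset.mem_univ, if_true]
    rw [← Finset.sum_mul, ht, one_mul]
  have hs1 : ∑ j, thR q j * b j = 0 := by
    have e : ∀ j, thR q j * b j = ∑ x, ∑ y, B x y * (thR q j * thR q (j * (x - y))) := by
      intro j
      simp only [b, Finset.mul_sum]
      refine Finset.sum_congr rfl fun x _ => Finset.sum_congr rfl fun y _ => by ring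
    simp only [e]
    rw [swap (fun j d => thR q j * thR q (j * d))]
    refine Finset.sum_eq_zero fun x _ => Finset.sum_eq_zero fun y _ => ?_
    have e2 : ∀ j, thR q j * thR q (j * (x - y))
        = (thR q (j * (x - y + 1)) + thR q (j * (x - y - 1))) / 2 := by
      intro j
      rw [mul_add, mul_sub j (x - y) 1, mul_one, thR_add, thR_sub]; ring
    simp only [e2]
    rw [← Finset.sum_div, Finset.sum_add_distrib, thR_sum, thR_sum]
    by_cases h1 : x - y + 1 = 0
    · rw [hz x y (Or.inl (by linear_combination -h1)), zero_mul]
    by_cases h2 : x - y - 1 = 0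
    · rw [hz x y (Or.inr (by linear_combination -h2)), zero_mul]
    simp [h1, h2]
  have key : (1 + c) * b 0 ≤ ∑ j, (thR q j + c) * b j := by
    have h := Finset.single_le_sum (f := fun j => (thR q j + c) * b j) (s := Finset.univ)
      (fun j _ => mul_nonneg (by linarith [thR_ge q hq j]) (hb j)) (Finset.mem_univ 0)
    simpa only [thR_zero] using h
  simp only [add_mul, Finset.sum_add_distrib, ← Finset.mul_sum, hs, hs1] at key
  rw [← hb0, le_div_iff₀ hc]
  linarith

theorem theta_lower (q : ℕ) [NeZero q] (hq : Odd q) (h3 : 3 ≤ q)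
    (hc0 : 0 ≤ Real.cos (Real.pi / q)) :
    ∃ B : Matrix (ZMod q) (ZMod q) ℝ, B.PosSemidef ∧
        (∑ i, B i i) = 1 ∧
        (∀ i j : ZMod q, (j = i + 1 ∨ j = i - 1) → B i j = 0) ∧
        (∑ i, ∑ j, B i j) = q * Real.cos (Real.pi / q) / (1 + Real.cos (Real.pi / q)) := by
  obtain ⟨k, hk⟩ := hq
  have hq0 : (0 : ℝ) < q := by exact_mod_cast NeZero.pos q
  have hck : thR q (k : ZMod q) = - Real.cos (Real.pi / q) := by
    rw [thR_nat, ← Real.cos_pi_sub]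
    congr 1
    have : (q : ℝ) = 2 * k + 1 := by exact_mod_cast hk
    field_simp
    rw [this]; ring
  have hk0 : (k : ZMod q) ≠ 0 := by
    rw [Ne, ZMod.natCast_eq_zero_iff]
    intro h
    have := Nat.le_of_dvd (by omega) h
    omega
  set c := Real.cos (Real.pi / q)
  have hc : 0 < 1 + c := by linarith
  have hsum : ∀ i : ZMod q, ∑ j, thR q ((k : ZMod q) * (i - j)) = 0 := by
    intro i
    rw [← Equiv.sum_comp (Equiv.subLeft i)]
    have := thR_sum q (k : ZMod q)
    rw [if_neg hk0] at this
    simpa [mul_comm] using this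
  refine ⟨Matrix.of fun i j => (c + thR q ((k : ZMod q) * (i - j))) / (q * (1 + c)), ?_, ?_, ?_, ?_⟩
  · apply Matrix.PosSemidef.of_dotProduct_mulVec_nonneg
    · ext i j
      simp only [Matrix.conjTranspose_apply, Matrix.of_apply, star_trivial]
      rw [← neg_sub i j, mul_neg, thR_neg]
    · intro v
      have e : dotProduct (star v) (Matrix.mulVec (Matrix.of fun i j =>
          (c + thR q ((k : ZMod q) * (i - j))) / (q * (1 + c))) v)
          = (c * (∑ i, v i) ^ 2 + (∑ i, v i * thR q (k * i)) ^ 2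
            + (∑ i, v i * thI q (k * i)) ^ 2) / (q * (1 + c)) := by
        simp only [sq, Finset.sum_mul_sum]
        simp only [dotProduct, Matrix.mulVec, Pi.star_apply, star_trivial, Matrix.of_apply,
          Finset.mul_sum, ← Finset.sum_add_distrib, Finset.sum_div,
          mul_sub, thR_sub]
        refine Finset.sum_congr rfl fun x _ => Finset.sum_congr rfl fun y _ => by ring
      rw [e]
      positivity
  · simp only [Matrix.of_apply, sub_self, mul_zero, thR_zero, Finset.sum_const, Finset.card_univ,
      ZMod.card, nsmul_eq_mul]
    field_simp
    ring
  · rintro i j (rfl | rfl)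
    · simp only [Matrix.of_apply]
      rw [show (k : ZMod q) * (i - (i + 1)) = -k by ring, thR_neg, hck]; simp
    · simp only [Matrix.of_apply]
      rw [show (k : ZMod q) * (i - (i - 1)) = k by ring, hck]; simp
  · simp only [Matrix.of_apply, ← Finset.sum_div, Finset.sum_add_distrib, hsum, Finset.sum_const,
      Finset.card_univ, ZMod.card, nsmul_eq_mul]
    field_simp
    ring

end ThetaAux


/-- the Lovász theta number of the odd cycle `C_q` equals
`q cos(π/q) / (1 + cos(π/q))`: every feasible solution of the theta SDP is bounded by this
value, and some feasible solution attains it. -/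
theorem theta_odd_cycle (q : ℕ) [NeZero q] (hq : Odd q) (h3 : 3 ≤ q) :
    (∀ B : Matrix (ZMod q) (ZMod q) ℝ, B.PosSemidef →
      (∑ i, B i i) = 1 →
      (∀ i j : ZMod q, (j = i + 1 ∨ j = i - 1) → B i j = 0) →
      (∑ i, ∑ j, B i j) ≤ q * Real.cos (Real.pi / q) / (1 + Real.cos (Real.pi / q)))
    ∧ ∃ B : Matrix (ZMod q) (ZMod q) ℝ, B.PosSemidef ∧
        (∑ i, B i i) = 1 ∧
        (∀ i j : ZMod q, (j = i + 1 ∨ j = i - 1) → B i j = 0) ∧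
        (∑ i, ∑ j, B i j) = q * Real.cos (Real.pi / q) / (1 + Real.cos (Real.pi / q)) := by

  have hc0 : 0 ≤ Real.cos (Real.pi / q) := by
    have h : (3 : ℝ) ≤ q := by exact_mod_cast h3
    apply Real.cos_nonneg_of_neg_pi_div_two_le_of_le
    · have : 0 ≤ Real.pi / q := by positivity
      linarith [Real.pi_pos]
    · gcongr
      linarith
  exact ⟨fun B hB ht hz => theta_upper q hq (by linarith) B hB ht hz, theta_lower q hq h3 hc0⟩
end
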